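/- arXiv:1910.07902 — 2 statements merged into one kernel-verified Lean document; each statement's English description precedes it below -/
import Mathlib

section
/- Let i denote the imaginary unit. Then (i/6) · ∫_{-∞}^{∞} (−24 − 8iξ + 120ξ² + 40iξ³) / ((ξ − i)³ (1 + ξ²)⁴) dξ = −(5/8)π. -/
open Complex MeasureTheory

/-!
Put `u = ξ - i` and `w = ξ + i`. The denominator is `u⁷w⁴` and the numerator is
`8i (5uw - 6)(2u - w)`, so the integrand is a combination of four monomials `u⁻ᵐw⁻ⁿ`. For poles `a`,
`b` in the upper and lower half plane, dividing `(x - b) - (x - a) = a - b` by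
`(x - a)ᵐ⁺¹(x - b)ⁿ⁺¹` gives a Pascal-type recursion for the integrals of such monomials. Pure
powers of order at least two integrate to zero, and the remaining case of two simple poles is
`2πi / (a - b)`, the total increment of `log (x - a) - log (x - b)` over the line being `2πi`.
-/

open Filter Topology Bornology

lemma ofReal_sub_ne_zero {c : ℂ} (hc : c.im ≠ 0) (x : ℝ) : (x : ℂ) - c ≠ 0 := fun h =>
  hc (by simpa using congrArg im h)

lemma hasDerivAt_ofReal_sub (c : ℂ) (x : ℝ) : HasDerivAt (fun y : ℝ => (y : ℂ) - c) 1 x :=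
  ofRealCLM.hasDerivAt.sub_const c

lemma hasDerivAt_inv_ofReal_sub {c : ℂ} (hc : c.im ≠ 0) (x : ℝ) :
    HasDerivAt (fun y : ℝ => ((y : ℂ) - c)⁻¹) (-((x : ℂ) - c)⁻¹ ^ 2) x := by
  simpa [neg_div] using (hasDerivAt_ofReal_sub c x).fun_inv (ofReal_sub_ne_zero hc x)

lemma exists_norm_inv_ofReal_sub_le {c : ℂ} (hc : c.im ≠ 0) :
    ∃ C : ℝ, ∀ x : ℝ, ‖((x : ℂ) - c)⁻¹‖ ≤ C * (1 + |x|)⁻¹ := by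
  refine ⟨1 + (1 + ‖c‖) / |c.im|, fun x => ?_⟩
  have norm_pos : 0 < ‖(x : ℂ) - c‖ := norm_pos_iff.2 (ofReal_sub_ne_zero hc x)
  have im_le : |c.im| ≤ ‖(x : ℂ) - c‖ := by simpa using abs_im_le_norm ((x : ℂ) - c)
  have abs_le : |x| ≤ ‖(x : ℂ) - c‖ + ‖c‖ := by simpa using norm_le_norm_sub_add (x : ℂ) c
  have const_le : 1 + ‖c‖ ≤ (1 + ‖c‖) / |c.im| * ‖(x : ℂ) - c‖ := by
    rw [div_mul_eq_mul_div, le_div_iff₀ (abs_pos.2 hc)]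
    gcongr
  rw [norm_inv, ← div_eq_mul_inv, inv_le_iff_one_le_mul₀' norm_pos, mul_div_assoc',
    one_le_div (by positivity)]
  linarith

lemma integrable_inv_ofReal_sub_pow_mul {a b : ℂ} (ha : a.im ≠ 0) (hb : b.im ≠ 0) {m n : ℕ}
    (hmn : 2 ≤ m + n) :
    Integrable fun x : ℝ => ((x : ℂ) - a)⁻¹ ^ m * ((x : ℂ) - b)⁻¹ ^ n := by
  obtain ⟨A, hA⟩ := exists_norm_inv_ofReal_sub_le ha
  obtain ⟨B, hB⟩ := exists_norm_inv_ofReal_sub_le hb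
  have A_nonneg : 0 ≤ A := by simpa using (norm_nonneg _).trans (hA 0)
  have B_nonneg : 0 ≤ B := by simpa using (norm_nonneg _).trans (hB 0)
  have continuous_inv {c : ℂ} (hc : c.im ≠ 0) : Continuous fun x : ℝ => ((x : ℂ) - c)⁻¹ :=
    (by fun_prop : Continuous fun x : ℝ => (x : ℂ) - c).inv₀ (ofReal_sub_ne_zero hc)
  refine (integrable_inv_one_add_sq.const_mul (A ^ m * B ^ n)).mono'
    (((continuous_inv ha).pow m).mul ((continuous_inv hb).pow n)).aestronglyMeasurable
    (.of_forall fun x => ?_)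
  have decay : (1 + |x|)⁻¹ ^ (m + n) ≤ (1 + x ^ 2)⁻¹ :=
    calc (1 + |x|)⁻¹ ^ (m + n) ≤ (1 + |x|)⁻¹ ^ 2 :=
          pow_le_pow_of_le_one (by positivity) (inv_le_one_of_one_le₀ (by simp)) hmn
      _ ≤ (1 + x ^ 2)⁻¹ := by
          rw [inv_pow]
          gcongr
          nlinarith [abs_nonneg x, sq_abs x]
  calc ‖((x : ℂ) - a)⁻¹ ^ m * ((x : ℂ) - b)⁻¹ ^ n‖
      = ‖((x : ℂ) - a)⁻¹‖ ^ m * ‖((x : ℂ) - b)⁻¹‖ ^ n := by rw [norm_mul, norm_pow, norm_pow]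
    _ ≤ (A * (1 + |x|)⁻¹) ^ m * (B * (1 + |x|)⁻¹) ^ n := by
        gcongr
        exacts [hA x, hB x]
    _ = A ^ m * B ^ n * (1 + |x|)⁻¹ ^ (m + n) := by ring
    _ ≤ A ^ m * B ^ n * (1 + x ^ 2)⁻¹ := by gcongr

lemma tendsto_inv_ofReal_sub_cobounded (c : ℂ) :
    Tendsto (fun x : ℝ => ((x : ℂ) - c)⁻¹) (cobounded ℝ) (𝓝 0) :=
  tendsto_inv₀_cobounded.comp
    ((tendsto_sub_const_cobounded c).comp (RCLike.tendsto_ofReal_cobounded_cobounded ℂ))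

lemma integral_inv_ofReal_sub_pow_add_two {c : ℂ} (hc : c.im ≠ 0) (n : ℕ) :
    ∫ x : ℝ, ((x : ℂ) - c)⁻¹ ^ (n + 2) = 0 := by
  have antideriv (x : ℝ) : HasDerivAt (fun y : ℝ => -((n : ℂ) + 1)⁻¹ * ((y : ℂ) - c)⁻¹ ^ (n + 1))
      (((x : ℂ) - c)⁻¹ ^ (n + 2)) x := by
    have n_ne : (n : ℂ) + 1 ≠ 0 := n.cast_add_one_ne_zero
    refine (((hasDerivAt_inv_ofReal_sub hc x).fun_pow (n + 1)).const_mul _).congr_deriv ?_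
    simp only [Nat.add_sub_cancel]
    push_cast
    linear_combination ((x : ℂ) - c)⁻¹ ^ (n + 2) * inv_mul_cancel₀ n_ne
  have integrable : Integrable fun x : ℝ => ((x : ℂ) - c)⁻¹ ^ (n + 2) := by
    simpa using integrable_inv_ofReal_sub_pow_mul hc hc (m := n + 2) (n := 0) (by lia)
  have limit : Tendsto (fun x : ℝ => -((n : ℂ) + 1)⁻¹ * ((x : ℂ) - c)⁻¹ ^ (n + 1))
      (cobounded ℝ) (𝓝 0) := by
    simpa using ((tendsto_inv_ofReal_sub_cobounded c).pow (n + 1)).const_mul (-((n : ℂ) + 1)⁻¹)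
  simpa using integral_of_hasDerivAt_of_tendsto antideriv integrable
    (limit.mono_left IsOrderBornology.atBot_le_cobounded)
    (limit.mono_left IsOrderBornology.atTop_le_cobounded)

lemma log_neg_of_im_pos {z : ℂ} (hz : 0 < z.im) : log (-z) = log z - Real.pi * I := by
  simp only [log, norm_neg, arg_neg_eq_arg_sub_pi_of_im_pos hz]
  push_cast
  ring

lemma tendsto_log_ofReal_sub_sub_log (c : ℂ) :
    Tendsto (fun x : ℝ => log (x - c) - Real.log x) atTop (𝓝 0) := by
  have ratio : Tendsto (fun x : ℝ => 1 - c * (x : ℂ)⁻¹) atTop (𝓝 1) := by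
    simpa using ((tendsto_inv₀_cobounded.comp
      (RCLike.tendsto_ofReal_atTop_cobounded ℂ)).const_mul c).const_sub 1
  have log_ratio := (continuousAt_clog one_mem_slitPlane).tendsto.comp ratio
  rw [log_one] at log_ratio
  refine log_ratio.congr' ?_
  filter_upwards [eventually_gt_atTop 0, ratio.eventually_ne one_ne_zero] with x x_pos ratio_ne
  have factor : (x : ℂ) - c = x * (1 - c * (x : ℂ)⁻¹) := by
    have : (x : ℂ) ≠ 0 := ofReal_ne_zero.2 x_pos.ne'
    field_simp
  rw [Function.comp_apply, factor, log_ofReal_mul x_pos ratio_ne]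
  ring

lemma tendsto_log_sub_log_atTop (a b : ℂ) :
    Tendsto (fun x : ℝ => log (x - a) - log (x - b)) atTop (𝓝 0) := by
  simpa using (tendsto_log_ofReal_sub_sub_log a).sub (tendsto_log_ofReal_sub_sub_log b)

lemma tendsto_log_sub_log_atBot {a b : ℂ} (ha : 0 < a.im) (hb : b.im < 0) :
    Tendsto (fun x : ℝ => log (x - a) - log (x - b)) atBot (𝓝 (-(2 * Real.pi * I))) := by
  have reflected := ((tendsto_log_sub_log_atTop (-a) (-b)).comp
    tendsto_neg_atBot_atTop).sub_const (2 * Real.pi * I)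
  rw [zero_sub] at reflected
  refine reflected.congr fun x => ?_
  have log_a : log (x - a) = log (-x + a) - Real.pi * I := by
    rw [← log_neg_of_im_pos (by simpa using ha)]
    ring_nf
  have log_b : log (-x + b) = log (x - b) - Real.pi * I := by
    rw [← log_neg_of_im_pos (by simpa using hb)]
    ring_nf
  simp only [Function.comp_apply, ofReal_neg, sub_neg_eq_add, log_a, log_b]
  ring

lemma inv_ofReal_sub_mul_inv_ofReal_sub {a b : ℂ} (ha : a.im ≠ 0) (hb : b.im ≠ 0) (hab : a ≠ b)
    (x : ℝ) :
    ((x : ℂ) - a)⁻¹ * ((x : ℂ) - b)⁻¹ = (((x : ℂ) - a)⁻¹ - ((x : ℂ) - b)⁻¹) / (a - b) := by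
  rw [eq_div_iff (sub_ne_zero.2 hab), inv_sub_inv (ofReal_sub_ne_zero ha x)
    (ofReal_sub_ne_zero hb x), ← mul_inv, inv_mul_eq_div, sub_sub_sub_cancel_left]

lemma integral_inv_ofReal_sub_mul_inv_ofReal_sub {a b : ℂ} (ha : 0 < a.im) (hb : b.im < 0) :
    ∫ x : ℝ, ((x : ℂ) - a)⁻¹ * ((x : ℂ) - b)⁻¹ = 2 * Real.pi * I / (a - b) := by
  have hab : a ≠ b := ne_of_apply_ne im (hb.trans ha).ne'
  have hasDerivAt_log {c : ℂ} (hc : c.im ≠ 0) (x : ℝ) :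
      HasDerivAt (fun y : ℝ => log (y - c)) (((x : ℂ) - c)⁻¹) x := by
    simpa using (hasDerivAt_ofReal_sub c x).clog_real
      (mem_slitPlane_iff.2 (.inr (by simpa using hc)))
  have antideriv (x : ℝ) : HasDerivAt (fun y : ℝ => (log (y - a) - log (y - b)) / (a - b))
      (((x : ℂ) - a)⁻¹ * ((x : ℂ) - b)⁻¹) x := by
    rw [inv_ofReal_sub_mul_inv_ofReal_sub ha.ne' hb.ne hab]
    exact ((hasDerivAt_log ha.ne' x).fun_sub (hasDerivAt_log hb.ne x)).div_const _
  have integrable : Integrable fun x : ℝ => ((x : ℂ) - a)⁻¹ * ((x : ℂ) - b)⁻¹ := by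
    simpa using integrable_inv_ofReal_sub_pow_mul ha.ne' hb.ne (m := 1) (n := 1) le_rfl
  rw [integral_of_hasDerivAt_of_tendsto antideriv integrable
    ((tendsto_log_sub_log_atBot ha hb).div_const _) ((tendsto_log_sub_log_atTop a b).div_const _)]
  ring

lemma integral_inv_ofReal_sub_pow_succ_mul_succ {a b : ℂ} (ha : a.im ≠ 0) (hb : b.im ≠ 0)
    (hab : a ≠ b) {m n : ℕ} (hmn : 1 ≤ m + n) :
    ∫ x : ℝ, ((x : ℂ) - a)⁻¹ ^ (m + 1) * ((x : ℂ) - b)⁻¹ ^ (n + 1) =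
      ((∫ x : ℝ, ((x : ℂ) - a)⁻¹ ^ (m + 1) * ((x : ℂ) - b)⁻¹ ^ n) -
        ∫ x : ℝ, ((x : ℂ) - a)⁻¹ ^ m * ((x : ℂ) - b)⁻¹ ^ (n + 1)) / (a - b) := by
  rw [← integral_sub (integrable_inv_ofReal_sub_pow_mul ha hb (by lia))
    (integrable_inv_ofReal_sub_pow_mul ha hb (by lia)), ← integral_div]
  refine integral_congr_ae (.of_forall fun x => ?_)
  linear_combination ((x : ℂ) - a)⁻¹ ^ m * ((x : ℂ) - b)⁻¹ ^ n *
    inv_ofReal_sub_mul_inv_ofReal_sub ha hb hab x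

theorem integral_inv_ofReal_sub_pow_mul_inv_ofReal_sub_pow {a b : ℂ} (ha : 0 < a.im)
    (hb : b.im < 0) (m n : ℕ) :
    ∫ x : ℝ, ((x : ℂ) - a)⁻¹ ^ (m + 1) * ((x : ℂ) - b)⁻¹ ^ (n + 1) =
      2 * Real.pi * I * (-1) ^ m * (m + n).choose m / (a - b) ^ (m + n + 1) := by
  have hab : a ≠ b := ne_of_apply_ne im (hb.trans ha).ne'
  have sub_ne : a - b ≠ 0 := sub_ne_zero.2 hab
  induction m generalizing n with
  | zero =>
    induction n with
    | zero => simpa using integral_inv_ofReal_sub_mul_inv_ofReal_sub ha hb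
    | succ n ihn =>
      rw [integral_inv_ofReal_sub_pow_succ_mul_succ ha.ne' hb.ne hab (by lia), ihn]
      simp only [pow_zero, one_mul, integral_inv_ofReal_sub_pow_add_two hb.ne,
        Nat.choose_zero_right]
      field_simp
      ring
  | succ m ihm =>
    induction n with
    | zero =>
      rw [integral_inv_ofReal_sub_pow_succ_mul_succ ha.ne' hb.ne hab (by lia), ihm]
      simp only [pow_zero, mul_one, integral_inv_ofReal_sub_pow_add_two ha.ne', add_zero,
        Nat.choose_self]
      field_simp
      ring
    | succ n ihn =>
      have pascal : ((m + 1 + (n + 1)).choose (m + 1) : ℂ) =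
          (m + (n + 1)).choose m + (m + 1 + n).choose (m + 1) := by
        rw [show m + 1 + (n + 1) = (m + (n + 1)) + 1 by ring, Nat.choose_succ_succ,
          show m + 1 + n = m + (n + 1) by ring, Nat.cast_add]
      rw [integral_inv_ofReal_sub_pow_succ_mul_succ ha.ne' hb.ne hab (by lia), ihm, ihn, pascal]
      field_simp
      ring

lemma integrable_inv_sub_I_pow_mul_inv_add_I_pow {m n : ℕ} (hmn : 2 ≤ m + n) :
    Integrable fun x : ℝ => ((x : ℂ) - I)⁻¹ ^ m * ((x : ℂ) + I)⁻¹ ^ n := by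
  simpa only [sub_neg_eq_add] using
    integrable_inv_ofReal_sub_pow_mul (a := I) (b := -I) (by simp) (by simp) hmn

lemma integral_inv_sub_I_pow_mul_inv_add_I_pow (m n : ℕ) :
    ∫ x : ℝ, ((x : ℂ) - I)⁻¹ ^ (m + 1) * ((x : ℂ) + I)⁻¹ ^ (n + 1) =
      Real.pi * (-1) ^ m * (m + n).choose m / (2 * I) ^ (m + n) := by
  have general := integral_inv_ofReal_sub_pow_mul_inv_ofReal_sub_pow (a := I) (b := -I)
    (by simp) (by simp) m n
  simp only [sub_neg_eq_add, ← two_mul] at general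
  rw [general, pow_succ]
  field_simp [I_ne_zero]

lemma integrand_eq_sum_inv_pow_mul_inv_pow (x : ℝ) :
    (-24 - 8 * I * (x : ℂ) + 120 * (x : ℂ) ^ 2 + 40 * I * (x : ℂ) ^ 3) /
        (((x : ℂ) - I) ^ 3 * (1 + (x : ℂ) ^ 2) ^ 4) =
      80 * I * (((x : ℂ) - I)⁻¹ ^ 5 * ((x : ℂ) + I)⁻¹ ^ 3) -
        40 * I * (((x : ℂ) - I)⁻¹ ^ 6 * ((x : ℂ) + I)⁻¹ ^ 2) -
        96 * I * (((x : ℂ) - I)⁻¹ ^ 6 * ((x : ℂ) + I)⁻¹ ^ 4) +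
        48 * I * (((x : ℂ) - I)⁻¹ ^ 7 * ((x : ℂ) + I)⁻¹ ^ 3) := by
  have u_ne : (x : ℂ) - I ≠ 0 := ofReal_sub_ne_zero (by simp) x
  have w_ne : (x : ℂ) + I ≠ 0 := by
    simpa only [sub_neg_eq_add] using ofReal_sub_ne_zero (c := -I) (by simp) x
  have factor_den : 1 + (x : ℂ) ^ 2 = ((x : ℂ) - I) * ((x : ℂ) + I) := by
    linear_combination I_sq
  have factor_num : -24 - 8 * I * (x : ℂ) + 120 * (x : ℂ) ^ 2 + 40 * I * (x : ℂ) ^ 3 =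
      8 * I * (5 * (((x : ℂ) - I) * ((x : ℂ) + I)) - 6) *
        (2 * ((x : ℂ) - I) - ((x : ℂ) + I)) := by
    rw [← factor_den]
    linear_combination (-24 + 120 * (x : ℂ) ^ 2) * I_sq
  rw [factor_num, factor_den]
  field_simp
  ring

theorem stmt_3 :
    (I / 6) * ∫ ξ : ℝ,
        (-24 - 8 * I * (ξ : ℂ) + 120 * (ξ : ℂ) ^ 2 + 40 * I * (ξ : ℂ) ^ 3) /
          (((ξ : ℂ) - I) ^ 3 * (1 + (ξ : ℂ) ^ 2) ^ 4)
      = -(5 / 8) * (Real.pi : ℂ) := by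
  have integrable (c : ℂ) {m n : ℕ} (hmn : 2 ≤ m + n) :
      Integrable fun ξ : ℝ => c * (((ξ : ℂ) - I)⁻¹ ^ m * ((ξ : ℂ) + I)⁻¹ ^ n) :=
    (integrable_inv_sub_I_pow_mul_inv_add_I_pow hmn).const_mul c
  simp only [integrand_eq_sum_inv_pow_mul_inv_pow]
  rw [integral_add, integral_sub, integral_sub]
  · simp only [integral_const_mul]
    rw [integral_inv_sub_I_pow_mul_inv_add_I_pow 4 2,
      integral_inv_sub_I_pow_mul_inv_add_I_pow 5 1,
      integral_inv_sub_I_pow_mul_inv_add_I_pow 5 3,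
      integral_inv_sub_I_pow_mul_inv_add_I_pow 6 2]
    have two_I_pow_six : (2 * I) ^ 6 = -64 := by
      linear_combination 64 * (I ^ 4 - I ^ 2 + 1) * I_sq
    have two_I_pow_eight : (2 * I) ^ 8 = 256 := by
      linear_combination 256 * (I ^ 4 + 1) * (I ^ 2 - 1) * I_sq
    simp only [Nat.reduceAdd, two_I_pow_six, two_I_pow_eight, Nat.choose, Nat.cast_ofNat]
    linear_combination (5 / 8 * Real.pi) * I_sq
  all_goals
    repeat' refine Integrable.sub ?_ ?_
    all_goals exact integrable _ (by simp)
end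

section
/- Let i denote the imaginary unit. Then (i/6) · ∫_{-∞}^{∞} (96iξ) / ((ξ − i)³ (1 + ξ²)⁴) dξ = (7/8)π. -/
open Complex MeasureTheory

/-!
For `a` in the upper and `b` in the lower half plane put
`J m n = ∫ dx / ((x - a) ^ m * (x - b) ^ n)`. Dividing `a - b = (x - b) - (x - a)` by
`(x - a) ^ (m + 1) * (x - b) ^ (n + 1)` and integrating gives the Pascal-type recursion
`(a - b) * J (m + 1) (n + 1) = J (m + 1) n - J m (n + 1)`. The boundary values `J (m + 2) 0` and
`J 0 (n + 2)` vanish and `J 1 1 = 2πi / (a - b)`, so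
`J (m + 1) (n + 1) = 2πi (-1) ^ m * (m + n).choose m / (a - b) ^ (m + n + 1)`, which is `2πi` times
the residue at `a`. With `a = i`, `b = -i` and `2ξ = (ξ - i) + (ξ + i)`, the integral of the
theorem is `48i * (J 6 4 + J 7 3)`.
-/

open Filter Topology Asymptotics Bornology Polynomial

/-- The restriction to the real line of the rational function with a pole of order `m` at `a` and a
pole of order `n` at `b`; its integrals are the `J m n` above. At a real pole its value is `0`. -/
noncomputable def twoPoleKernel (a b : ℂ) (m n : ℕ) (x : ℝ) : ℂ :=
  (((x : ℂ) - a) ^ m * ((x : ℂ) - b) ^ n)⁻¹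

section

variable {a b : ℂ}

lemma ofReal_sub_ne_zero_s5 (ha : a.im ≠ 0) (x : ℝ) : (x : ℂ) - a ≠ 0 := fun h ↦
  ha (by simpa using congrArg im h)

lemma hasDerivAt_ofReal_sub_const (a : ℂ) (x : ℝ) : HasDerivAt (fun t : ℝ ↦ (t : ℂ) - a) 1 x :=
  ofRealCLM.hasDerivAt.sub_const a

lemma twoPoleKernel_swap (a b : ℂ) (m n : ℕ) : twoPoleKernel a b m n = twoPoleKernel b a n m := by
  funext x
  simp only [twoPoleKernel, mul_comm]

lemma twoPoleKernel_one_one (ha : a.im ≠ 0) (hb : b.im ≠ 0) (hab : a ≠ b) (x : ℝ) :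
    twoPoleKernel a b 1 1 x = (((x : ℂ) - a)⁻¹ - ((x : ℂ) - b)⁻¹) / (a - b) := by
  have hxa := ofReal_sub_ne_zero_s5 ha x
  have hxb := ofReal_sub_ne_zero_s5 hb x
  have hab' := sub_ne_zero.mpr hab
  rw [twoPoleKernel]
  field_simp
  ring

lemma sub_mul_twoPoleKernel (ha : a.im ≠ 0) (hb : b.im ≠ 0) (m n : ℕ) (x : ℝ) :
    (a - b) * twoPoleKernel a b (m + 1) (n + 1) x =
      twoPoleKernel a b (m + 1) n x - twoPoleKernel a b m (n + 1) x := by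
  have hxa := ofReal_sub_ne_zero_s5 ha x
  have hxb := ofReal_sub_ne_zero_s5 hb x
  simp only [twoPoleKernel]
  field_simp
  ring

lemma continuous_twoPoleKernel (ha : a.im ≠ 0) (hb : b.im ≠ 0) (m n : ℕ) :
    Continuous (twoPoleKernel a b m n) :=
  Continuous.inv₀ (by fun_prop) fun x ↦
    mul_ne_zero (pow_ne_zero m (ofReal_sub_ne_zero_s5 ha x)) (pow_ne_zero n (ofReal_sub_ne_zero_s5 hb x))

lemma twoPoleKernel_isBigO_inv_one_add_sq (a b : ℂ) {m n : ℕ} (hmn : 2 ≤ m + n) :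
    twoPoleKernel a b m n =O[cobounded ℝ] fun x ↦ (1 + x ^ 2)⁻¹ := by
  have degree_le : (1 + X ^ 2 : ℂ[X]).degree ≤ ((X - C a) ^ m * (X - C b) ^ n).degree := by
    have degree_left : (1 + X ^ 2 : ℂ[X]).degree = 2 := by compute_degree!
    rw [degree_left, degree_mul, degree_pow, degree_pow, degree_X_sub_C, degree_X_sub_C]
    simpa using mod_cast hmn
  have one_add_sq_isBigO : (fun x : ℝ ↦ 1 + x ^ 2) =O[cobounded ℝ]
      fun x : ℝ ↦ ((x : ℂ) - a) ^ m * ((x : ℂ) - b) ^ n := by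
    rw [← Complex.isBigO_ofReal_left]
    simpa [Function.comp_def] using (isBigO_cobounded_of_degree_le degree_le).comp_tendsto
      (RCLike.tendsto_ofReal_cobounded_cobounded ℂ)
  exact one_add_sq_isBigO.inv_rev (.of_forall fun x hx ↦ absurd hx (by positivity))

lemma integrable_twoPoleKernel (ha : a.im ≠ 0) (hb : b.im ≠ 0) {m n : ℕ} (hmn : 2 ≤ m + n) :
    Integrable (twoPoleKernel a b m n) := by
  refine (continuous_twoPoleKernel ha hb m n).locallyIntegrable.integrable_of_isBigO_cocompact ?_
    (integrable_inv_one_add_sq.integrableAtFilter _)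
  rw [← Metric.cobounded_eq_cocompact]
  exact twoPoleKernel_isBigO_inv_one_add_sq a b hmn

lemma tendsto_inv_ofReal_sub_pow (a : ℂ) (m : ℕ) :
    Tendsto (fun x : ℝ ↦ (((x : ℂ) - a) ^ (m + 1))⁻¹) (cobounded ℝ) (𝓝 0) := by
  have tendsto_inv : Tendsto (fun x : ℝ ↦ ((x : ℂ) - a)⁻¹) (cobounded ℝ) (𝓝 0) :=
    tendsto_inv₀_cobounded.comp
      ((tendsto_sub_const_cobounded a).comp (RCLike.tendsto_ofReal_cobounded_cobounded ℂ))
  simpa using tendsto_inv.pow (m + 1)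

lemma hasDerivAt_neg_inv_ofReal_sub_pow_div (ha : a.im ≠ 0) (m : ℕ) (x : ℝ) :
    HasDerivAt (fun t : ℝ ↦ -(((t : ℂ) - a) ^ (m + 1))⁻¹ / (m + 1))
      (((x : ℂ) - a) ^ (m + 2))⁻¹ x := by
  have hxa := ofReal_sub_ne_zero_s5 ha x
  refine ((((hasDerivAt_ofReal_sub_const a x).pow (m + 1)).inv
    (pow_ne_zero _ hxa)).neg.div_const (m + 1 : ℂ)).congr_deriv ?_
  have succ_ne_zero : (m + 1 : ℂ) ≠ 0 := mod_cast m.succ_ne_zero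
  push_cast
  simp only [Pi.pow_apply]
  field_simp
  ring

lemma integral_twoPoleKernel_zero_right (ha : a.im ≠ 0) (b : ℂ) (m : ℕ) :
    ∫ x, twoPoleKernel a b (m + 2) 0 x = 0 := by
  have kernel_eq (c : ℂ) :
      twoPoleKernel a c (m + 2) 0 = fun x : ℝ ↦ (((x : ℂ) - a) ^ (m + 2))⁻¹ := by
    simp only [funext_iff, twoPoleKernel, pow_zero, mul_one, implies_true]
  have tendsto_primitive : Tendsto (fun x : ℝ ↦ -(((x : ℂ) - a) ^ (m + 1))⁻¹ / (m + 1))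
      (cobounded ℝ) (𝓝 0) := by
    simpa using (tendsto_inv_ofReal_sub_pow a m).neg.div_const (m + 1 : ℂ)
  have integrable := integrable_twoPoleKernel ha ha (m := m + 2) (n := 0) (by lia)
  rw [kernel_eq] at integrable ⊢
  simpa using integral_of_hasDerivAt_of_tendsto
    (hasDerivAt_neg_inv_ofReal_sub_pow_div ha m) integrable
    (tendsto_primitive.mono_left IsOrderBornology.atBot_le_cobounded)
    (tendsto_primitive.mono_left IsOrderBornology.atTop_le_cobounded)

lemma integral_twoPoleKernel_zero_left (a : ℂ) (hb : b.im ≠ 0) (n : ℕ) :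
    ∫ x, twoPoleKernel a b 0 (n + 2) x = 0 := by
  rw [twoPoleKernel_swap, integral_twoPoleKernel_zero_right hb]

-- `Real.log x` means `log |x|`, so this covers negative `x` as well.
lemma log_ofReal_sub_eq_log_add_log_div_abs (ha : a.im ≠ 0) {x : ℝ} (hx : x ≠ 0) :
    log ((x : ℂ) - a) = Real.log x + log (((x : ℂ) - a) / (|x| : ℝ)) := by
  have habs : ((|x| : ℝ) : ℂ) ≠ 0 := by simpa
  rw [← Real.log_abs x, ← log_ofReal_mul (abs_pos.mpr hx)
    (div_ne_zero (ofReal_sub_ne_zero_s5 ha x) habs), mul_div_cancel₀ _ habs]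

lemma tendsto_ofReal_sub_div_abs_atTop (a : ℂ) :
    Tendsto (fun x : ℝ ↦ ((x : ℂ) - a) / (|x| : ℝ)) atTop (𝓝 1) := by
  have tendsto_one_sub : Tendsto (fun x : ℝ ↦ 1 - a * (x : ℂ)⁻¹) atTop (𝓝 1) := by
    simpa using ((tendsto_inv₀_cobounded.comp (RCLike.tendsto_ofReal_atTop_cobounded ℂ)).const_mul
      a).const_sub 1
  refine tendsto_one_sub.congr' ?_
  filter_upwards [eventually_gt_atTop 0] with x hx
  have ofReal_ne_zero : (x : ℂ) ≠ 0 := mod_cast hx.ne'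
  rw [abs_of_pos hx]
  field_simp

lemma tendsto_ofReal_sub_div_abs_atBot (a : ℂ) :
    Tendsto (fun x : ℝ ↦ ((x : ℂ) - a) / (|x| : ℝ)) atBot (𝓝 (-1)) := by
  refine ((tendsto_ofReal_sub_div_abs_atTop (-a)).neg.comp tendsto_neg_atBot_atTop).congr fun x ↦ ?_
  simp only [Function.comp_apply, ofReal_neg, abs_neg]
  ring

lemma im_ofReal_sub_div_abs (a : ℂ) (x : ℝ) :
    (((x : ℂ) - a) / (|x| : ℝ)).im = -a.im / |x| := by
  simp [div_ofReal_im]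

lemma tendsto_log_ofReal_sub_sub_log_atTop (ha : a.im ≠ 0) :
    Tendsto (fun x : ℝ ↦ log ((x : ℂ) - a) - Real.log x) atTop (𝓝 0) := by
  have tendsto_log : Tendsto (fun x : ℝ ↦ log (((x : ℂ) - a) / (|x| : ℝ))) atTop (𝓝 0) := by
    simpa using (tendsto_ofReal_sub_div_abs_atTop a).clog one_mem_slitPlane
  refine tendsto_log.congr' ?_
  filter_upwards [eventually_ne_atTop 0] with x hx
  rw [log_ofReal_sub_eq_log_add_log_div_abs ha hx, add_sub_cancel_left]

lemma tendsto_log_ofReal_sub_sub_log_atBot_of_im_pos (ha : 0 < a.im) :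
    Tendsto (fun x : ℝ ↦ log ((x : ℂ) - a) - Real.log x) atBot (𝓝 (-(Real.pi * I))) := by
  have tendsto_within : Tendsto (fun x : ℝ ↦ ((x : ℂ) - a) / (|x| : ℝ)) atBot
      (𝓝[{z | z.im < 0}] (-1)) := by
    refine tendsto_nhdsWithin_iff.mpr ⟨tendsto_ofReal_sub_div_abs_atBot a, ?_⟩
    filter_upwards [eventually_ne_atBot 0] with x hx
    rw [im_ofReal_sub_div_abs]
    exact div_neg_of_neg_of_pos (neg_lt_zero.mpr ha) (abs_pos.mpr hx)
  have tendsto_log := (tendsto_log_nhdsWithin_im_neg_of_re_neg_of_im_zero (z := -1)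
    (by simp) (by simp)).comp tendsto_within
  simp only [norm_neg, norm_one, Real.log_one, ofReal_zero, zero_sub] at tendsto_log
  refine tendsto_log.congr' ?_
  filter_upwards [eventually_ne_atBot 0] with x hx
  rw [log_ofReal_sub_eq_log_add_log_div_abs ha.ne' hx, add_sub_cancel_left, Function.comp_apply]

lemma tendsto_log_ofReal_sub_sub_log_atBot_of_im_neg (ha : a.im < 0) :
    Tendsto (fun x : ℝ ↦ log ((x : ℂ) - a) - Real.log x) atBot (𝓝 (Real.pi * I)) := by
  have tendsto_within : Tendsto (fun x : ℝ ↦ ((x : ℂ) - a) / (|x| : ℝ)) atBot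
      (𝓝[{z | 0 ≤ z.im}] (-1)) := by
    refine tendsto_nhdsWithin_iff.mpr ⟨tendsto_ofReal_sub_div_abs_atBot a, .of_forall fun x ↦ ?_⟩
    rw [Set.mem_ofPred_eq, im_ofReal_sub_div_abs]
    exact div_nonneg (neg_nonneg.mpr ha.le) (abs_nonneg x)
  have tendsto_log := (tendsto_log_nhdsWithin_im_nonneg_of_re_neg_of_im_zero (z := -1)
    (by simp) (by simp)).comp tendsto_within
  simp only [norm_neg, norm_one, Real.log_one, ofReal_zero, zero_add] at tendsto_log
  refine tendsto_log.congr' ?_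
  filter_upwards [eventually_ne_atBot 0] with x hx
  rw [log_ofReal_sub_eq_log_add_log_div_abs ha.ne hx, add_sub_cancel_left, Function.comp_apply]

lemma hasDerivAt_log_ofReal_sub (ha : a.im ≠ 0) (x : ℝ) :
    HasDerivAt (fun t : ℝ ↦ log ((t : ℂ) - a)) ((x : ℂ) - a)⁻¹ x := by
  have mem_slitPlane : (x : ℂ) - a ∈ slitPlane := .inr (by simpa using ha)
  simpa using (hasDerivAt_ofReal_sub_const a x).clog_real mem_slitPlane

theorem integral_twoPoleKernel_one_one (ha : 0 < a.im) (hb : b.im < 0) :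
    ∫ x, twoPoleKernel a b 1 1 x = 2 * Real.pi * I / (a - b) := by
  have hab : a ≠ b := fun h ↦ (hb.trans ha).ne' (congrArg im h)
  have hasDerivAt_primitive (x : ℝ) :
      HasDerivAt (fun t : ℝ ↦ (log ((t : ℂ) - a) - log ((t : ℂ) - b)) / (a - b))
        (twoPoleKernel a b 1 1 x) x := by
    rw [twoPoleKernel_one_one ha.ne' hb.ne hab]
    exact ((hasDerivAt_log_ofReal_sub ha.ne' x).sub
      (hasDerivAt_log_ofReal_sub hb.ne x)).div_const _
  have tendsto_atTop := ((tendsto_log_ofReal_sub_sub_log_atTop ha.ne').sub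
    (tendsto_log_ofReal_sub_sub_log_atTop hb.ne)).div_const (a - b)
  have tendsto_atBot := ((tendsto_log_ofReal_sub_sub_log_atBot_of_im_pos ha).sub
    (tendsto_log_ofReal_sub_sub_log_atBot_of_im_neg hb)).div_const (a - b)
  simp only [sub_sub_sub_cancel_right] at tendsto_atTop tendsto_atBot
  rw [integral_of_hasDerivAt_of_tendsto hasDerivAt_primitive
    (integrable_twoPoleKernel ha.ne' hb.ne le_rfl) tendsto_atBot tendsto_atTop]
  ring

lemma sub_mul_integral_twoPoleKernel (ha : a.im ≠ 0) (hb : b.im ≠ 0) {m n : ℕ}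
    (hmn : 1 ≤ m + n) :
    (a - b) * ∫ x, twoPoleKernel a b (m + 1) (n + 1) x =
      (∫ x, twoPoleKernel a b (m + 1) n x) - ∫ x, twoPoleKernel a b m (n + 1) x := by
  rw [← integral_const_mul, ← integral_sub (integrable_twoPoleKernel ha hb (by lia))
    (integrable_twoPoleKernel ha hb (by lia))]
  simp only [sub_mul_twoPoleKernel ha hb]

theorem integral_twoPoleKernel (ha : 0 < a.im) (hb : b.im < 0) (m n : ℕ) :
    ∫ x, twoPoleKernel a b (m + 1) (n + 1) x =
      2 * Real.pi * I * ((-1) ^ m * (m + n).choose m / (a - b) ^ (m + n + 1)) := by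
  have hab : a - b ≠ 0 := sub_ne_zero.mpr fun h ↦ (hb.trans ha).ne' (congrArg im h)
  induction m generalizing n with
  | zero =>
    induction n with
    | zero => simp [integral_twoPoleKernel_one_one ha hb, div_eq_mul_inv]
    | succ n ih =>
      apply mul_left_cancel₀ hab
      rw [sub_mul_integral_twoPoleKernel ha.ne' hb.ne (by lia),
        integral_twoPoleKernel_zero_left a hb.ne, ih]
      simp only [pow_zero, zero_add, Nat.choose_zero_right, Nat.cast_one, sub_zero]
      field_simp
      ring
  | succ m ihm =>
    induction n with
    | zero =>
      apply mul_left_cancel₀ hab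
      rw [sub_mul_integral_twoPoleKernel ha.ne' hb.ne (by lia),
        integral_twoPoleKernel_zero_right ha.ne', ihm]
      simp only [add_zero, Nat.choose_self, Nat.cast_one, zero_sub]
      field_simp
      ring
    | succ n ihn =>
      apply mul_left_cancel₀ hab
      rw [sub_mul_integral_twoPoleKernel ha.ne' hb.ne (by lia), ihn, ihm,
        show m + 1 + (n + 1) = m + n + 1 + 1 by ring, Nat.choose_succ_succ,
        show m + 1 + n = m + n + 1 by ring, show m + (n + 1) = m + n + 1 by ring]
      push_cast
      field_simp
      ring

end

lemma integrand_eq_twoPoleKernel_add (ξ : ℝ) :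
    (96 * I * (ξ : ℂ)) / (((ξ : ℂ) - I) ^ 3 * (1 + (ξ : ℂ) ^ 2) ^ 4) =
      48 * I * (twoPoleKernel I (-I) 6 4 ξ + twoPoleKernel I (-I) 7 3 ξ) := by
  have hI := ofReal_sub_ne_zero_s5 (a := I) (by simp) ξ
  have hnegI := ofReal_sub_ne_zero_s5 (a := -I) (by simp) ξ
  have one_add_sq : 1 + (ξ : ℂ) ^ 2 = ((ξ : ℂ) - I) * ((ξ : ℂ) - -I) := by
    linear_combination I_sq
  rw [one_add_sq, twoPoleKernel, twoPoleKernel]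
  field_simp
  ring

theorem stmt_5 :
    (I / 6) * ∫ ξ : ℝ,
        (96 * I * (ξ : ℂ)) / (((ξ : ℂ) - I) ^ 3 * (1 + (ξ : ℂ) ^ 2) ^ 4)
      = (7 / 8) * (Real.pi : ℂ) := by
  have im_I_pos : 0 < I.im := by simp
  have im_neg_I_neg : (-I).im < 0 := by simp
  have two_I_pow_nine : (I - -I) ^ 9 = 512 * I := by
    rw [sub_neg_eq_add, ← two_mul, mul_pow, I_pow_eq_pow_mod]
    norm_num
  have integral_six_four : ∫ ξ, twoPoleKernel I (-I) 6 4 ξ = -(7 / 32) * Real.pi := by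
    rw [integral_twoPoleKernel im_I_pos im_neg_I_neg 5 3, two_I_pow_nine,
      show Nat.choose (5 + 3) 5 = 56 from rfl]
    field_simp
    norm_num
  have integral_seven_three : ∫ ξ, twoPoleKernel I (-I) 7 3 ξ = 7 / 64 * Real.pi := by
    rw [integral_twoPoleKernel im_I_pos im_neg_I_neg 6 2, two_I_pow_nine,
      show Nat.choose (6 + 2) 6 = 28 from rfl]
    field_simp
    norm_num
  simp only [integrand_eq_twoPoleKernel_add]
  rw [integral_const_mul, integral_add
    (integrable_twoPoleKernel im_I_pos.ne' im_neg_I_neg.ne (by norm_num))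
    (integrable_twoPoleKernel im_I_pos.ne' im_neg_I_neg.ne (by norm_num)),
    integral_six_four, integral_seven_three]
  linear_combination (-7 / 8 * (Real.pi : ℂ)) * I_sq
end
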